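/- In the tensor product model of F_γ ⊗ D⁺_j (see context), assume j is a half-integer with j ≥ −½ and j > γ − 1. Then for every μ ∈ M_γ and every natural number n ≥ 1, (J₊)ⁿ ψ_(μ) ≠ 0, where ψ_(μ) := Σ_{ν=−γ}^{μ} (−1)^{γ+ν} · (∏_{σ=−γ}^{ν−1} Γ₊(j, j+μ−σ)/Γ₊(γ,σ)) · e_ν ⊗ f_{j+1+μ−ν}; i.e. the repeated action of the raising operator J₊ on each lowest weight vector never vanishes. -/

import Mathlib

noncomputable section

/-- The principal complex square root, `√z = z^{1/2}` (so `(√z)² = z` for all `z ∈ ℂ`). -/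
def csqrt (z : ℂ) : ℂ := z ^ (1 / 2 : ℂ)

/-- `Γ₊(x,y) = i √(x-y) √(x+y+1)`. -/
def Gp (x y : ℂ) : ℂ := Complex.I * csqrt (x - y) * csqrt (x + y + 1)

/-- `Γ₋(x,y) = i √(x+y) √(x-y+1)`. -/
def Gm (x y : ℂ) : ℂ := Complex.I * csqrt (x + y) * csqrt (x - y + 1)

/-- The carrier of the coupling `F_γ ⊗ D⁺_j` with `2γ = N`: the basis vector
`e_ν ⊗ f_m` with `ν = -γ + a` (`a ≤ N`) and `m = j + 1 + b` is indexed by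
`(a, b) : Fin (N+1) × ℕ`. -/
abbrev Wmod (N : ℕ) := (Fin (N + 1) × ℕ) →₀ ℂ

/-- `γ = N/2` as a complex number. -/
def gammaC (N : ℕ) : ℂ := (N : ℂ) / 2

/-- `ν = -γ + a`. -/
def nuC (N : ℕ) (a : Fin (N + 1)) : ℂ := -gammaC N + (a : ℕ)

/-- `m = j + 1 + b`. -/
def mC (j : ℂ) (b : ℕ) : ℂ := j + 1 + (b : ℕ)

/-- `J₀ (e_ν ⊗ f_m) = (ν + m) e_ν ⊗ f_m`. -/
def J0op (N : ℕ) (j : ℂ) : Wmod N →ₗ[ℂ] Wmod N :=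
  Finsupp.lsum ℂ fun ab => (nuC N ab.1 + mC j ab.2) • Finsupp.lsingle ab

/-- `J₊ (e_ν ⊗ f_m) = Γ₊(γ,ν) e_{ν+1} ⊗ f_m + Γ₊(j,m) e_ν ⊗ f_{m+1}` (terms with
vanishing coefficient drop out, so the wrap-around `Fin` index is harmless). -/
def Jpop (N : ℕ) (j : ℂ) : Wmod N →ₗ[ℂ] Wmod N :=
  Finsupp.lsum ℂ fun ab =>
    Gp (gammaC N) (nuC N ab.1) • Finsupp.lsingle (ab.1 + 1, ab.2) +
    Gp j (mC j ab.2) • Finsupp.lsingle (ab.1, ab.2 + 1)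

/-- `J₋ (e_ν ⊗ f_m) = Γ₋(γ,ν) e_{ν-1} ⊗ f_m + Γ₋(j,m) e_ν ⊗ f_{m-1}` (terms with
vanishing coefficient drop out, so the truncated index is harmless). -/
def Jmop (N : ℕ) (j : ℂ) : Wmod N →ₗ[ℂ] Wmod N :=
  Finsupp.lsum ℂ fun ab =>
    Gm (gammaC N) (nuC N ab.1) • Finsupp.lsingle (ab.1 - 1, ab.2) +
    Gm j (mC j ab.2) • Finsupp.lsingle (ab.1, ab.2 - 1)

/-- The Casimir operator `Q = -J₀(J₀+1) + J₋J₊`. -/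
def Qop (N : ℕ) (j : ℂ) : Wmod N →ₗ[ℂ] Wmod N :=
  -(J0op N j ∘ₗ (J0op N j + LinearMap.id)) + Jmop N j ∘ₗ Jpop N j

/-- The vector `ψ_(μ)`, `μ = -γ + u`:
`ψ_(μ) = ∑_{ν=-γ}^{μ} (-1)^{γ+ν} (∏_{σ=-γ}^{ν-1} Γ₊(j, j+μ-σ)/Γ₊(γ,σ)) e_ν ⊗ f_{j+1+μ-ν}`. -/
def psiVec (N : ℕ) (j : ℂ) (u : ℕ) (hu : u ≤ N) : Wmod N :=
  ∑ a : Fin (u + 1),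
    ((-1 : ℂ) ^ (a : ℕ) *
      ∏ s ∈ Finset.range (a : ℕ),
        Gp j (j + (u : ℂ) - (s : ℂ)) / Gp (gammaC N) (-gammaC N + (s : ℂ))) •
      Finsupp.single (Fin.castLE (Nat.succ_le_succ hu) a, u - (a : ℕ)) (1 : ℂ)


lemma csqrt_ne_zero {z : ℂ} (hz : z ≠ 0) : csqrt z ≠ 0 := by
  simp [csqrt, Complex.cpow_eq_zero_iff, hz]

lemma Gp_self (x : ℂ) : Gp x x = 0 := by
  simp [Gp, csqrt]

lemma Gp_ne_zero {x y : ℂ} (h₁ : x - y ≠ 0) (h₂ : x + y + 1 ≠ 0) : Gp x y ≠ 0 :=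
  mul_ne_zero (mul_ne_zero Complex.I_ne_zero (csqrt_ne_zero h₁)) (csqrt_ne_zero h₂)

/-- The coefficients of `J₊ w`; the index `a - 1` wraps around at `a = 0`. -/
lemma Jpop_apply_succ (N : ℕ) (j : ℂ) (w : Wmod N) (a : Fin (N + 1)) (b : ℕ) :
    Jpop N j w (a, b + 1) =
      Gp (gammaC N) (nuC N (a - 1)) * w (a - 1, b + 1) + Gp j (mC j b) * w (a, b) := by
  induction w using Finsupp.induction_linear with
  | zero => simp
  | add f g hf hg =>
    rw [map_add, Finsupp.add_apply, hf, hg, Finsupp.add_apply, Finsupp.add_apply]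
    ring
  | single p c =>
    obtain ⟨a', b'⟩ := p
    obtain ⟨d, rfl⟩ : ∃ d, a = d + 1 := ⟨a - 1, (sub_add_cancel a 1).symm⟩
    simp only [Jpop, Finsupp.lsum_single, LinearMap.add_apply, LinearMap.smul_apply,
      Finsupp.lsingle_apply, Finsupp.add_apply, Finsupp.smul_apply, Finsupp.single_apply,
      Prod.mk.injEq, add_left_inj, add_sub_cancel_right, smul_eq_mul]
    congr 1
    · by_cases h : a' = d ∧ b' = b + 1
      · rw [h.1]
      · simp only [if_neg h, mul_zero]
    · by_cases h : a' = d + 1 ∧ b' = b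
      · rw [h.2]
      · simp only [if_neg h, mul_zero]

/-- `J₊` is injective as soon as no coefficient of the raising operator on `D⁺_j` vanishes. -/
lemma Jpop_injective (N : ℕ) (j : ℂ) (hj : ∀ b, Gp j (mC j b) ≠ 0) :
    Function.Injective (Jpop N j) := by
  refine (injective_iff_map_eq_zero (Jpop N j)).2 fun w hw => ?_
  have key : ∀ (a : Fin (N + 1)) (b : ℕ), w (a, b) = 0 := by
    intro a
    induction a using Fin.induction with
    | zero =>
      intro b
      have h := Jpop_apply_succ N j w 0 b
      have hlast : nuC N (0 - 1) = gammaC N := by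
        have : ((0 - 1 : Fin (N + 1)) : ℕ) = N := by simp
        rw [nuC, this, gammaC]
        ring
      rw [hlast, Gp_self, hw] at h
      simpa [hj b] using h
    | succ i ih =>
      intro b
      have h := Jpop_apply_succ N j w i.succ b
      have hpred : i.succ - 1 = i.castSucc := by
        rw [sub_eq_iff_eq_add, Fin.coeSucc_eq_succ]
      rw [hpred, ih, hw] at h
      simpa [hj b] using h
  ext ⟨a, b⟩
  exact key a b

lemma psiVec_apply_zero (N : ℕ) (j : ℂ) (u : ℕ) (hu : u ≤ N) : psiVec N j u hu (0, u) = 1 := by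
  rw [psiVec, Finsupp.finsetSum_apply, Finset.sum_eq_single 0]
  · simp
  · intro a _ ha
    have : Fin.castLE (Nat.succ_le_succ hu) a ≠ 0 := by
      intro h
      have hval : (a : ℕ) = 0 := congrArg (fun x : Fin (N + 1) => (x : ℕ)) h
      exact ha (Fin.ext hval)
    simp [this]
  · simp

/-- In `F_γ ⊗ D⁺_j` with `j` a half-integer, `j ≥ -½` and `j > γ - 1`, the repeated
action of the raising operator `J₊` on each lowest weight vector `ψ_(μ)` never
vanishes. -/
theorem repeated_raising_nonzero (N : ℕ) (hN : 1 ≤ N) (jr : ℚ)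
    (hhalf : ∃ k : ℤ, (k : ℚ) = 2 * jr) (hge : -(1 / 2) ≤ jr)
    (hgt : (N : ℚ) / 2 - 1 < jr)
    (u : ℕ) (hu : u ≤ N) (nn : ℕ) (hnn : 1 ≤ nn) :
    ((Jpop N (jr : ℂ) : Module.End ℂ (Wmod N)) ^ nn) (psiVec N (jr : ℂ) u hu) ≠ 0 := by
  have hj : ∀ b, Gp (jr : ℂ) (mC jr b) ≠ 0 := by
    intro b
    have hb : (0 : ℚ) ≤ b := Nat.cast_nonneg b
    apply Gp_ne_zero
    · have h : jr - (jr + 1 + b) ≠ 0 := by linarith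
      simpa only [mC] using mod_cast h
    · have h : jr + (jr + 1 + b) + 1 ≠ 0 := by linarith
      simpa only [mC] using mod_cast h
  intro h
  have hinj : Function.Injective ((Jpop N (jr : ℂ) : Module.End ℂ (Wmod N)) ^ nn) := by
    rw [Module.End.coe_pow]
    exact (Jpop_injective N jr hj).iterate nn
  have hpsi := hinj (h.trans (map_zero _).symm)
  have hone := psiVec_apply_zero N jr u hu
  simp [hpsi] at hone

end
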